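/- Let M be the set of all functions f : ℕ → (ℕ → ℕ) with the metric d(f, g) = 0 if f = g and d(f, g) = 2^{-n₀} otherwise, where n₀ is the least n with f(n) ≠ g(n). For a binary relation φ on Baire space with ∀x ∃y φ(x, y), define O_n = {f ∈ M : ∃m φ(f(n), f(m))}. Then each O_n is open and dense in (M, d). -/

import Mathlib

open scoped Classical

/-- The metric on the space of sequences of elements of Baire space:
`d f g = 0` if `f = g` (pointwise), and `2^{-n₀}` otherwise, where `n₀` is the
least `n` with `f n ≠ g n`. -/
noncomputable def baireSeqDist (f g : ℕ → (ℕ → ℕ)) : ℝ :=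
  if h : ∃ n, f n ≠ g n then (1 / 2 : ℝ) ^ (Nat.find h) else 0

/-- For a relation φ on Baire space with ∀x ∃y φ(x,y), each set
`O_n = {f : ∃ m, φ (f n) (f m)}` is open and dense in `(M, d)`. -/
theorem baireSeq_On_open_dense (φ : (ℕ → ℕ) → (ℕ → ℕ) → Prop)
    (hφ : ∀ x : ℕ → ℕ, ∃ y : ℕ → ℕ, φ x y) (n : ℕ) :
    (∀ f : ℕ → (ℕ → ℕ), (∃ m, φ (f n) (f m)) →
      ∃ r : ℝ, 0 < r ∧ ∀ g : ℕ → (ℕ → ℕ), baireSeqDist f g < r →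
        ∃ m, φ (g n) (g m)) ∧
    (∀ f : ℕ → (ℕ → ℕ), ∀ r : ℝ, 0 < r →
      ∃ g : ℕ → (ℕ → ℕ), baireSeqDist f g < r ∧ ∃ m, φ (g n) (g m)) := by
  constructor
  · rintro f ⟨m, hm⟩
    refine ⟨(1 / 2 : ℝ) ^ (max n m), by positivity, fun g hg => ?_⟩
    have key : ∀ i, i ≤ max n m → f i = g i := by
      intro i hi
      by_contra hne
      have h : ∃ n, f n ≠ g n := ⟨i, hne⟩
      have hle : Nat.find h ≤ max n m := (Nat.find_min' h hne).trans hi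
      have h2 : (1 / 2 : ℝ) ^ (max n m) ≤ (1 / 2 : ℝ) ^ (Nat.find h) :=
        pow_le_pow_of_le_one (by norm_num) (by norm_num) hle
      unfold baireSeqDist at hg
      rw [dif_pos h] at hg
      exact absurd hg (not_lt.mpr h2)
    refine ⟨m, ?_⟩
    rw [← key n (le_max_left _ _), ← key m (le_max_right _ _)]
    exact hm
  · intro f r hr
    obtain ⟨k, hk⟩ := exists_pow_lt_of_lt_one hr (by norm_num : (1 / 2 : ℝ) < 1)
    obtain ⟨y, hy⟩ := hφ (f n)
    have hn : n ≠ n + k + 1 := by omega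
    refine ⟨Function.update f (n + k + 1) y, ?_, n + k + 1, ?_⟩
    · unfold baireSeqDist
      split_ifs with h
      · have hs := Nat.find_spec h
        have he : Nat.find h = n + k + 1 := by
          by_contra hne
          exact hs (Function.update_of_ne hne y f).symm
        have h2 : (1 / 2 : ℝ) ^ (Nat.find h) ≤ (1 / 2 : ℝ) ^ k :=
          pow_le_pow_of_le_one (by norm_num) (by norm_num) (by omega)
        exact lt_of_le_of_lt h2 hk
      · exact hr
    · rw [Function.update_of_ne hn, Function.update_self]
      exact hy
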